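/- arXiv:1607.02844 — 2 statements merged into one kernel-verified Lean document; each statement's English description precedes it below -/
import Mathlib

section
/- Let (g_1,…,g_n) be a tuple of order-2 elements of A6 with n ≥ 4 such that g_1,…,g_n generate A6. Then there exists a tuple (h_1,…,h_n) Hurwitz-equivalent to (g_1,…,g_n) and indices i < j < l such that the three elements h_i, h_j, h_l generate A6. -/
/-- The `i`-th Hurwitz move on `k`-tuples of elements of a group `G`:
`(g₁,…,gₖ) ↦ (g₁,…,g_{i-1}, g_{i+1}, g_{i+1}⁻¹ g_i g_{i+1}, g_{i+2},…,gₖ)`. -/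
def HurwitzMove {G : Type*} [Group G] {k : ℕ} (g h : Fin k → G) : Prop :=
  ∃ i : ℕ, ∃ hi : i + 1 < k,
    h ⟨i, Nat.lt_of_succ_lt hi⟩ = g ⟨i + 1, hi⟩ ∧
    h ⟨i + 1, hi⟩ = (g ⟨i + 1, hi⟩)⁻¹ * g ⟨i, Nat.lt_of_succ_lt hi⟩ * g ⟨i + 1, hi⟩ ∧
    ∀ j : Fin k, (j : ℕ) ≠ i → (j : ℕ) ≠ i + 1 → h j = g j

/-- Hurwitz equivalence: the equivalence relation generated by the Hurwitz moves. -/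
def HurwitzEquiv {G : Type*} [Group G] {k : ℕ} (g h : Fin k → G) : Prop :=
  Relation.EqvGen HurwitzMove g h

/-- The Nielsen class `Ni(A₆, C_{2×2}^k)`: `k`-tuples of order-2 elements of `A₆`
(products of two disjoint transpositions) with product `1` generating `A₆`. -/
def NielsenSet (k : ℕ) : Set (Fin k → Equiv.Perm (Fin 6)) :=
  {g | (∀ i, g i ∈ alternatingGroup (Fin 6)) ∧ (∀ i, orderOf (g i) = 2) ∧
       (List.ofFn g).prod = 1 ∧
       Subgroup.closure (Set.range g) = alternatingGroup (Fin 6)}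

/-- One step of the absolute equivalence: a Hurwitz move, or simultaneous
conjugation of all entries by a single element of `S₆`. -/
def AbsRel (k : ℕ) (g h : Fin k → Equiv.Perm (Fin 6)) : Prop :=
  HurwitzMove g h ∨ ∃ s : Equiv.Perm (Fin 6), h = fun i => s⁻¹ * g i * s

/-- One step of the inner equivalence: a Hurwitz move, or simultaneous
conjugation of all entries by a single element of `A₆`. -/
def InnerRel (k : ℕ) (g h : Fin k → Equiv.Perm (Fin 6)) : Prop :=
  HurwitzMove g h ∨
    ∃ s ∈ alternatingGroup (Fin 6), h = fun i => s⁻¹ * g i * s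

/-- The set of fixed points of a permutation. -/
def FixedPts {n : ℕ} (g : Equiv.Perm (Fin n)) : Set (Fin n) := {x | g x = x}

/-!
Let `(a, b)` be a noncommuting pair of entries, in any tuple of the Hurwitz orbit, whose product
has the largest possible order; this order is 3, 4 or 5. Besides `A₆`, only two maximal subgroups
`M` and `N` of `S₆` matter for the pair. An entry outside both, multiplied by one of the involutions
of `⟨a, b⟩`, gives a product of larger order, unless `ab` has order 5, and then it generates `A₆`
together with `a` and `b`: the three act primitively on the six points and produce a 3-cycle.

Such an entry can always be braided next to `(a, b)`. Since the tuple generates `A₆`, the other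
entries lie neither all in `M` nor all in `N`. If none is outside both, there are `x ∈ N \ M` and
`y ∈ M \ N`, and conjugating `x` by `y`, or first carrying `x` once around `(a, b)`, leaves both.
-/

section Sublists

variable {α : Type*}

theorem pair_sublist_or_pair_sublist {l : List α} {x y : α} (hx : x ∈ l) (hy : y ∈ l)
    (hxy : x ≠ y) : [x, y].Sublist l ∨ [y, x].Sublist l := by
  obtain ⟨p, q, rfl⟩ := List.append_of_mem hx
  rcases List.mem_append.mp hy with hy | hy
  · exact .inr ((List.singleton_sublist.mpr hy).append (by simp : [x].Sublist (x :: q)))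
  · exact .inl (.trans (by simpa using List.mem_of_ne_of_mem hxy.symm hy)
      (List.sublist_append_right p (x :: q)))

theorem exists_lt_lt_of_sublist_ofFn {n : ℕ} {h : Fin n → α} {a b c : α}
    (hs : [a, b, c].Sublist (List.ofFn h)) :
    ∃ i j l, i < j ∧ j < l ∧ h i = a ∧ h j = b ∧ h l = c := by
  obtain ⟨f, hf⟩ := List.sublist_iff_exists_fin_orderEmbedding_get_eq.mp hs
  let e : Fin 3 ↪o Fin n := f.trans (Fin.castOrderIso List.length_ofFn).toOrderEmbedding
  have he (i : Fin 3) : h (e i) = [a, b, c].get i :=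
    (List.get_ofFn h (f i)).symm.trans (hf i).symm
  exact ⟨e 0, e 1, e 2, e.lt_iff_lt.mpr (by decide), e.lt_iff_lt.mpr (by decide),
    he 0, he 1, he 2⟩

end Sublists

section Groups

variable {G : Type*} [Group G]

theorem orderOf_mul_le_two_of_commute {a b : G} (ha : orderOf a = 2)
    (hb : orderOf b = 2) (hab : Commute a b) : orderOf (a * b) ≤ 2 :=
  Nat.le_of_dvd two_pos (by simpa [ha, hb] using hab.orderOf_mul_dvd_lcm)

theorem exists_pair_sublist_not_commute {l : List G}
    (hl : ¬ IsMulCommutative (Subgroup.closure {x | x ∈ l})) :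
    ∃ a b, [a, b].Sublist l ∧ ¬ Commute a b := by
  by_contra! hcomm
  refine hl (Subgroup.isMulCommutative_closure fun x hx y hy => ?_)
  by_cases hxy : x = y
  · rw [hxy]
  · exact (pair_sublist_or_pair_sublist hx hy hxy).elim (hcomm x y) fun h => (hcomm y x h).symm

theorem closure_conj_image_eq {K : Subgroup G} [K.Normal] {t : Set G}
    (ht : Subgroup.closure t = K) (s : G) : Subgroup.closure (MulAut.conj s '' t) = K := by
  rw [← Subgroup.Normal.map_conj_eq K s, ← ht, MonoidHom.map_closure]
  rfl

theorem isPreprimitive_of_pow_smul {α : Type*} [MulAction G α] {r z : G} {o : α}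
    (hro : r • o = o) (hr : ∀ x ≠ o, ∀ y ≠ o, ∃ k : ℕ, r ^ k • x = y) (hzo : z • o ≠ o) :
    MulAction.IsPreprimitive G α := by
  have hrk (k : ℕ) : r ^ k • o = o := by
    induction k with
    | zero => simp
    | succ k ih => rw [pow_succ, mul_smul, hro, ih]
  have hpoint (x : α) : ∃ g : G, g • x = o := by
    by_cases hx : x = o
    · exact ⟨1, by simp [hx]⟩
    · obtain ⟨k, hk⟩ := hr x hx (z⁻¹ • o) fun h => hzo (inv_smul_eq_iff.mp h).symm
      exact ⟨z * r ^ k, by rw [mul_smul, hk, smul_inv_smul]⟩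
  have hpair {x y : α} (hxy : x ≠ y) : ∃ g : G, g • x = o ∧ g • y = z • o := by
    obtain ⟨g, hgx⟩ := hpoint x
    have hgy : g • y ≠ o := fun h => hxy (MulAction.injective g (hgx.trans h.symm))
    obtain ⟨k, hk⟩ := hr (g • y) hgy (z • o) hzo
    exact ⟨r ^ k * g, by rw [mul_smul, hgx, hrk], by rw [mul_smul, hk]⟩
  refine MulAction.isPreprimitive_of_is_two_pretransitive
    (MulAction.is_two_pretransitive_iff.mpr fun {a b c d} hab hcd => ?_)
  obtain ⟨g, hga, hgb⟩ := hpair hab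
  obtain ⟨h, hhc, hhd⟩ := hpair hcd
  exact ⟨h⁻¹ * g, by rw [mul_smul, hga, ← hhc, inv_smul_smul],
    by rw [mul_smul, hgb, ← hhd, inv_smul_smul]⟩

end Groups

section Braids

variable {G H : Type*} [Group G] [Group H]

/-- `BraidsTo l l'` says that a sequence of Hurwitz moves takes the tuple `l` to `l'`. Tuples are
lists here, so that subtuples are sublists; only forward moves are used. -/
inductive BraidsTo : List G → List G → Prop
  | refl (l : List G) : BraidsTo l l
  | swap (a b : G) (l : List G) : BraidsTo (a :: b :: l) (b :: b⁻¹ * a * b :: l)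
  | cons (a : G) {l l' : List G} : BraidsTo l l' → BraidsTo (a :: l) (a :: l')
  | trans {l₁ l₂ l₃ : List G} : BraidsTo l₁ l₂ → BraidsTo l₂ l₃ → BraidsTo l₁ l₃

theorem HurwitzEquiv.cons (a : G) {k : ℕ} {g h : Fin k → G} (hgh : HurwitzEquiv g h) :
    HurwitzEquiv (Fin.cons a g : Fin (k + 1) → G) (Fin.cons a h) := by
  induction hgh with
  | rel g h hgh =>
    obtain ⟨i, hi, hleft, hright, hrest⟩ := hgh
    refine .rel _ _ ⟨i + 1, by lia, hleft, hright, fun j => Fin.cases (fun _ _ => rfl) ?_ j⟩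
    intro j hj hj'
    exact hrest j (by simpa using hj) (by simpa using hj')
  | refl g => exact .refl _
  | symm g h _ ih => exact ih.symm
  | trans g h k _ _ ih₁ ih₂ => exact ih₁.trans _ _ _ ih₂

theorem hurwitzEquiv_cons_cons (a b : G) {k : ℕ} (g : Fin k → G) :
    HurwitzEquiv (Fin.cons a (Fin.cons b g : Fin (k + 1) → G) : Fin (k + 2) → G)
      (Fin.cons b (Fin.cons (b⁻¹ * a * b) g : Fin (k + 1) → G)) := by
  refine .rel _ _ ⟨0, by lia, rfl, rfl, fun j => ?_⟩
  refine Fin.cases (fun h _ => absurd rfl h) (fun j => ?_) j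
  exact Fin.cases (fun _ h => absurd rfl h) (fun _ _ _ => rfl) j

namespace BraidsTo

theorem exists_hurwitzEquiv {l l' : List G} (h : BraidsTo l l') {n : ℕ} {g : Fin n → G}
    (hg : List.ofFn g = l) : ∃ g' : Fin n → G, List.ofFn g' = l' ∧ HurwitzEquiv g g' := by
  induction h generalizing n with
  | refl l => exact ⟨g, hg, .refl _⟩
  | swap a b l =>
    obtain rfl : n = l.length + 2 := by simpa using congrArg List.length hg
    obtain rfl : g = Fin.cons a (Fin.cons b l.get : Fin (l.length + 1) → G) :=
      List.ofFn_injective (by simpa using hg)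
    exact ⟨_, by simp, hurwitzEquiv_cons_cons a b l.get⟩
  | @cons a l l' _ ih =>
    obtain rfl : n = l.length + 1 := by simpa using congrArg List.length hg
    obtain rfl : g = Fin.cons a l.get := List.ofFn_injective (by simpa using hg)
    obtain ⟨g', hg', hequiv⟩ := ih (List.ofFn_get l)
    exact ⟨Fin.cons a g', by simp [hg'], hequiv.cons a⟩
  | trans _ _ ih₁ ih₂ =>
    obtain ⟨g', hg', hequiv⟩ := ih₁ hg
    obtain ⟨g'', hg'', hequiv'⟩ := ih₂ hg'
    exact ⟨g'', hg'', hequiv.trans _ _ _ hequiv'⟩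

theorem append_left (u : List G) {l l' : List G} (h : BraidsTo l l') :
    BraidsTo (u ++ l) (u ++ l') := by
  induction u with
  | nil => exact h
  | cons a u ih => exact ih.cons a

theorem append_right {l l' : List G} (h : BraidsTo l l') (v : List G) :
    BraidsTo (l ++ v) (l' ++ v) := by
  induction h with
  | refl l => exact .refl _
  | swap a b l => exact .swap a b _
  | cons a _ ih => exact ih.cons a
  | trans _ _ ih₁ ih₂ => exact ih₁.trans ih₂

theorem map (f : G →* H) {l l' : List G} (h : BraidsTo l l') :
    BraidsTo (l.map f) (l'.map f) := by
  induction h with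
  | refl l => exact .refl _
  | swap a b l => simpa using swap (f a) (f b) (l.map f)
  | cons a _ ih => exact ih.cons _
  | trans _ _ ih₁ ih₂ => exact ih₁.trans ih₂

theorem forall_mem {C : Set G} (hC : ∀ a ∈ C, ∀ b : G, b * a * b⁻¹ ∈ C) {l l' : List G}
    (h : BraidsTo l l') (hl : ∀ x ∈ l, x ∈ C) : ∀ x ∈ l', x ∈ C := by
  induction h with
  | refl l => exact hl
  | swap a b l =>
    simp only [List.forall_mem_cons] at hl ⊢
    exact ⟨hl.2.1, by simpa using hC a hl.1 b⁻¹, hl.2.2⟩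
  | cons a _ ih =>
    simp only [List.forall_mem_cons] at hl ⊢
    exact ⟨hl.1, ih hl.2⟩
  | trans _ _ ih₁ ih₂ => exact ih₂ (ih₁ hl)

theorem forall_mem_subgroup {l l' : List G} (h : BraidsTo l l') {K : Subgroup G}
    (hl' : ∀ x ∈ l', x ∈ K) : ∀ x ∈ l, x ∈ K := by
  induction h with
  | refl l => exact hl'
  | swap a b l =>
    simp only [List.forall_mem_cons] at hl' ⊢
    obtain ⟨hb, hab, hl⟩ := hl'
    exact ⟨by simpa [mul_assoc] using mul_mem (mul_mem hb hab) (inv_mem hb), hb, hl⟩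
  | cons a _ ih =>
    simp only [List.forall_mem_cons] at hl' ⊢
    exact ⟨hl'.1, ih hl'.2⟩
  | trans _ _ ih₁ ih₂ => exact ih₁ (ih₂ hl')

theorem append_singleton (u : List G) (x : G) :
    BraidsTo (u ++ [x]) (x :: u.map fun y => x⁻¹ * y * x) := by
  induction u with
  | nil => exact .refl _
  | cons a u ih => exact (ih.cons a).trans (swap a x _)

theorem cons_append (x : G) (u : List G) :
    BraidsTo (x :: u) (u ++ [u.prod⁻¹ * x * u.prod]) := by
  induction u generalizing x with
  | nil => simpa using refl [x]
  | cons a u ih =>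
    refine (swap x a u).trans ?_
    simpa [mul_assoc] using (ih (a⁻¹ * x * a)).cons a

theorem exists_sublist {t t' : List G} (h : BraidsTo t t') {l : List G} (htl : t.Sublist l) :
    ∃ l', BraidsTo l l' ∧ t'.Sublist l' := by
  induction h generalizing l with
  | refl t => exact ⟨l, refl l, htl⟩
  | swap a b t =>
    obtain ⟨_, _, rfl, ha, hbt⟩ := List.cons_sublist_iff.mp htl
    obtain ⟨_, r, rfl, hb, ht⟩ := List.cons_sublist_iff.mp hbt
    obtain ⟨p, q, rfl⟩ := List.append_of_mem ha
    obtain ⟨u, v, rfl⟩ := List.append_of_mem hb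
    have hbraid := (((append_singleton (q ++ u) b).cons a).trans (swap a b _)).append_right (v ++ r)
    refine ⟨_, by simpa using hbraid.append_left p, ?_⟩
    refine List.sublist_append_of_sublist_right (.cons_cons _ (.cons_cons _ ?_))
    refine List.sublist_append_of_sublist_right ?_
    exact List.sublist_append_of_sublist_right (List.sublist_append_of_sublist_right ht)
  | cons a _ ih =>
    obtain ⟨r₁, r₂, rfl, ha, ht⟩ := List.cons_sublist_iff.mp htl
    obtain ⟨l', hl', ht'⟩ := ih ht
    exact ⟨r₁ ++ l', hl'.append_left r₁, List.cons_sublist_iff.mpr ⟨r₁, l', rfl, ha, ht'⟩⟩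
  | trans _ _ ih₁ ih₂ =>
    obtain ⟨l', hl', ht'⟩ := ih₁ htl
    obtain ⟨l'', hl'', ht''⟩ := ih₂ ht'
    exact ⟨l'', hl'.trans hl'', ht''⟩

theorem exists_append_of_sublist {t l : List G} (htl : t.Sublist l) :
    ∃ m, BraidsTo l (t ++ m) := by
  induction htl with
  | slnil => exact ⟨[], refl _⟩
  | cons_cons a _ ih =>
    obtain ⟨m, hm⟩ := ih
    exact ⟨m, hm.cons a⟩
  | cons a _ ih =>
    obtain ⟨m, hm⟩ := ih
    exact ⟨_, by simpa using (hm.cons a).trans (cons_append a _)⟩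

end BraidsTo

end Braids

section Minors

variable {G : Type*} [Group G]

/-- The tuple `t` is a *Hurwitz minor* of the tuple `l` if Hurwitz moves take some simultaneous
conjugate of `l` to a tuple with `t` as a subtuple. -/
def HurwitzMinor (t l : List G) : Prop :=
  ∃ (s : G) (l' : List G), BraidsTo (l.map (MulAut.conj s)) l' ∧ t.Sublist l'

theorem BraidsTo.hurwitzMinor {t l l' : List G} (h : BraidsTo l l') (ht : t.Sublist l') :
    HurwitzMinor t l :=
  ⟨1, l', by simpa using h, ht⟩

namespace HurwitzMinor

theorem map_conj (s : G) (l : List G) : HurwitzMinor (l.map (MulAut.conj s)) l :=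
  ⟨s, _, .refl _, .refl _⟩

theorem trans {t m l : List G} (htm : HurwitzMinor t m) (hml : HurwitzMinor m l) :
    HurwitzMinor t l := by
  obtain ⟨s, m', hm, ht⟩ := htm
  obtain ⟨r, l', hl, hm'⟩ := hml
  obtain ⟨l'', hl'', hm''⟩ := hm.exists_sublist (hm'.map (MulAut.conj s))
  refine ⟨s * r, l'', ?_, ht.trans hm''⟩
  have hl' := hl.map (MulAut.conj s).toMonoidHom
  exact .trans (by simpa [Function.comp_def, mul_assoc] using hl') hl''

theorem exists_braidsTo_append {t l : List G} (h : HurwitzMinor t l) :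
    ∃ (s : G) (m : List G), BraidsTo (l.map (MulAut.conj s)) (t ++ m) := by
  obtain ⟨s, l', hl', ht⟩ := h
  obtain ⟨m, hm⟩ := BraidsTo.exists_append_of_sublist ht
  exact ⟨s, m, hl'.trans hm⟩

theorem forall_mem {C : Set G} (hC : ∀ a ∈ C, ∀ b : G, b * a * b⁻¹ ∈ C) {t l : List G}
    (h : HurwitzMinor t l) (hl : ∀ x ∈ l, x ∈ C) : ∀ x ∈ t, x ∈ C := by
  obtain ⟨s, l', hl', ht⟩ := h
  have hconj : ∀ x ∈ l.map (MulAut.conj s), x ∈ C := by simpa using fun x hx => hC x (hl x hx) s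
  exact fun x hx => hl'.forall_mem hC hconj x (ht.subset hx)

theorem exists_hurwitzEquiv {t : List G} {n : ℕ} {g : Fin n → G}
    (ht : HurwitzMinor t (List.ofFn g)) :
    ∃ (s : G) (h : Fin n → G), HurwitzEquiv g h ∧
      (t.map (MulAut.conj s)).Sublist (List.ofFn h) := by
  obtain ⟨s, l, hl, htl⟩ := ht
  have hl' : BraidsTo (List.ofFn g) (l.map (MulAut.conj s⁻¹)) := by
    simpa [Function.comp_def, mul_assoc] using hl.map (MulAut.conj s⁻¹).toMonoidHom
  obtain ⟨h, hh, hgh⟩ := hl'.exists_hurwitzEquiv rfl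
  exact ⟨s⁻¹, h, hgh, hh ▸ htl.map _⟩

end HurwitzMinor

theorem BraidsTo.exists_notMem {l l' : List G} {s : G} (h : BraidsTo (l.map (MulAut.conj s)) l')
    (hl : (Subgroup.closure {x | x ∈ l}).Normal) {M : Subgroup G}
    (hM : ¬ Subgroup.closure {x | x ∈ l} ≤ M) : ∃ x ∈ l', x ∉ M := by
  by_contra! hl'
  have hconj : Subgroup.closure {x | x ∈ l} ≤ M.comap (MulAut.conj s).toMonoidHom :=
    (Subgroup.closure_le _).mpr fun x hx =>
      h.forall_mem_subgroup hl' _ (List.mem_map_of_mem (f := MulAut.conj s) hx)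
  refine hM fun x hx => ?_
  simpa [mul_assoc] using hconj (hl.conj_mem x hx s⁻¹)

theorem hurwitzMinor_swap (a b x y : G) :
    HurwitzMinor [a, b, y⁻¹ * x * y] [a, b, x, y] :=
  ((BraidsTo.swap x y []).append_left [a, b]).hurwitzMinor (by simp)

theorem hurwitzMinor_around (a b x y : G) :
    HurwitzMinor [a, b, (x * y * x⁻¹)⁻¹ * ((a * b)⁻¹ * x * (a * b)) * (x * y * x⁻¹)]
      [a, b, x, y] := by
  have hpull : BraidsTo [a, b, x, y] [x, x⁻¹ * a * x, x⁻¹ * b * x, y] :=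
    (BraidsTo.append_singleton [a, b] x).append_right [y]
  have hpush := ((BraidsTo.cons_append x [x⁻¹ * a * x, x⁻¹ * b * x]).append_right [y]).trans
    ((BraidsTo.swap _ y []).append_left [x⁻¹ * a * x, x⁻¹ * b * x])
  refine .trans (.trans ?_ (.map_conj x _)) ((hpull.trans hpush).hurwitzMinor (.refl _))
  exact (BraidsTo.refl _).hurwitzMinor (by simp [mul_assoc])

theorem hurwitzMinor_pair_of_mem {a b r : G} (z : G)
    (hr : r ∈ [a, b, b⁻¹ * a * b]) : HurwitzMinor [r, z] [a, b, z] := by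
  have hself {t : List G} (ht : t.Sublist [a, b, z]) : HurwitzMinor t [a, b, z] :=
    (BraidsTo.refl _).hurwitzMinor ht
  simp only [List.mem_cons, List.not_mem_nil, or_false] at hr
  rcases hr with rfl | rfl | rfl
  · exact hself (by simp)
  · exact hself (by simp)
  · exact (BraidsTo.swap a b [z]).hurwitzMinor (by simp)

/-- One of two braids of `(a, b, x, y)` puts an entry outside both `M` and `N` right after `a` and
`b`. The first swaps `x` and `y`; the second carries `x` once around `a` and `b` before that. -/
def BraidEscapes (a b : G) (M N : Subgroup G) (x y : G) : Prop :=
  (y⁻¹ * x * y ∉ M ∧ y⁻¹ * x * y ∉ N) ∨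
    ((x * y * x⁻¹)⁻¹ * ((a * b)⁻¹ * x * (a * b)) * (x * y * x⁻¹) ∉ M ∧
      (x * y * x⁻¹)⁻¹ * ((a * b)⁻¹ * x * (a * b)) * (x * y * x⁻¹) ∉ N)

instance (a b : G) (M N : Subgroup G) [DecidablePred (· ∈ M)] [DecidablePred (· ∈ N)] (x y : G) :
    Decidable (BraidEscapes a b M N x y) :=
  inferInstanceAs (Decidable (_ ∨ _))

theorem BraidEscapes.exists_notMem {a b x y : G} {M N : Subgroup G}
    (h : BraidEscapes a b M N x y) :
    ∃ z, z ∉ M ∧ z ∉ N ∧ HurwitzMinor [a, b, z] [a, b, x, y] := by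
  rcases h with ⟨hM, hN⟩ | ⟨hM, hN⟩
  · exact ⟨_, hM, hN, hurwitzMinor_swap a b x y⟩
  · exact ⟨_, hM, hN, hurwitzMinor_around a b x y⟩

theorem HurwitzMinor.exists_escape {l : List G} {a b : G} (hab : HurwitzMinor [a, b] l)
    (hl : (Subgroup.closure {x | x ∈ l}).Normal) {C : Set G}
    (hC : ∀ a ∈ C, ∀ b : G, b * a * b⁻¹ ∈ C) (hlC : ∀ x ∈ l, x ∈ C) {M N : Subgroup G}
    (hlM : ¬ Subgroup.closure {x | x ∈ l} ≤ M) (hlN : ¬ Subgroup.closure {x | x ∈ l} ≤ N)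
    (haM : a ∈ M) (haN : a ∈ N) (hbM : b ∈ M) (hbN : b ∈ N)
    (hesc : ∀ x ∈ C, x ∉ M → x ∈ N → ∀ y ∈ C, y ∈ M → y ∉ N →
      BraidEscapes a b M N x y ∧ BraidEscapes a b M N y x) :
    ∃ z, z ∉ M ∧ z ∉ N ∧ HurwitzMinor [a, b, z] l := by
  obtain ⟨s, m, hm⟩ := hab.exists_braidsTo_append
  have hminor {t : List G} (ht : t.Sublist m) : HurwitzMinor (a :: b :: t) l :=
    ⟨s, _, hm, ht.append_left [a, b]⟩
  by_cases! hz : ∃ z ∈ m, z ∉ M ∧ z ∉ N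
  · obtain ⟨z, hzm, hzM, hzN⟩ := hz
    exact ⟨z, hzM, hzN, hminor (List.singleton_sublist.mpr hzm)⟩
  have hmC (x : G) (hx : x ∈ m) : x ∈ C := (hminor (.refl m)).forall_mem hC hlC x (by simp [hx])
  obtain ⟨x, hxm, hxM⟩ : ∃ x ∈ m, x ∉ M := by
    simpa [haM, hbM] using hm.exists_notMem hl hlM
  obtain ⟨y, hym, hyN⟩ : ∃ y ∈ m, y ∉ N := by
    simpa [haN, hbN] using hm.exists_notMem hl hlN
  have hxN : x ∈ N := hz x hxm hxM
  have hyM : y ∈ M := by_contra fun hyM => hyN (hz y hym hyM)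
  obtain ⟨hxy, hyx⟩ := hesc x (hmC x hxm) hxM hxN y (hmC y hym) hyM hyN
  rcases pair_sublist_or_pair_sublist hxm hym (ne_of_mem_of_not_mem hyM hxM).symm with h | h
  · obtain ⟨z, hzM, hzN, habz⟩ := hxy.exists_notMem
    exact ⟨z, hzM, hzN, habz.trans (hminor h)⟩
  · obtain ⟨z, hzM, hzN, habz⟩ := hyx.exists_notMem
    exact ⟨z, hzM, hzN, habz.trans (hminor h)⟩

end Minors

section DoubleTranspositions

open Equiv (swap)
open Equiv.Perm (sign)

/-- The double transpositions of six points, listed so that statements about all of them can be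
evaluated: each of the fifteen 4-subsets `{i, j, k, l}` supports three. -/
def doubleTranspositions : Finset (Equiv.Perm (Fin 6)) where
  val := ((List.finRange 6).sublistsLen 4).flatMap fun
    | [i, j, k, l] => [swap i j * swap k l, swap i k * swap j l, swap i l * swap j k]
    | _ => []
  nodup := by decide +kernel

theorem mem_doubleTranspositions {σ : Equiv.Perm (Fin 6)} :
    σ ∈ doubleTranspositions ↔ σ ∈ alternatingGroup (Fin 6) ∧ orderOf σ = 2 := by
  have hfwd : ∀ τ : doubleTranspositions, sign τ.1 = 1 ∧ τ.1 ^ 2 = 1 ∧ τ.1 ≠ 1 := by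
    decide +kernel
  have hbwd : ∀ τ : Equiv.Perm (Fin 6), sign τ = 1 → τ ^ 2 = 1 → τ ≠ 1 →
      τ ∈ doubleTranspositions := by decide +kernel
  rw [Equiv.Perm.mem_alternatingGroup, orderOf_eq_prime_iff]
  exact ⟨fun h => hfwd ⟨σ, h⟩, fun h => hbwd σ h.1 h.2.1 h.2.2⟩

theorem conj_mem_doubleTranspositions {σ : Equiv.Perm (Fin 6)} (hσ : σ ∈ doubleTranspositions)
    (s : Equiv.Perm (Fin 6)) : s * σ * s⁻¹ ∈ doubleTranspositions := by
  rw [mem_doubleTranspositions] at hσ ⊢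
  exact ⟨Subgroup.Normal.conj_mem inferInstance σ hσ.1 s, by
    rw [← MulAut.conj_apply, MulEquiv.orderOf_eq, hσ.2]⟩

end DoubleTranspositions

section CanonicalPairs

open Equiv (swap)
open Subgroup (normalizer)

/-- The simultaneous conjugacy classes of noncommuting pairs of double transpositions, named after
the order of the product. The classes `three` and `threeDual` are exchanged by the outer
automorphism, the classes `four` and `fourSwapped` by swapping the entries of the pair. -/
inductive PairType
  | three
  | threeDual
  | four
  | fourSwapped
  | five

instance {G : Type*} [Group G] [DecidableEq G] (T : Finset G) :
    DecidablePred (· ∈ normalizer (T : Set G)) := fun σ =>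
  decidable_of_iff (∀ τ ∈ T, σ * τ * σ⁻¹ ∈ T)
    ⟨fun h => Subgroup.mem_normalizer_fintype (by exact_mod_cast h), fun h τ hτ =>
      by exact_mod_cast (Subgroup.mem_set_normalizer_iff.mp h τ).mp (by exact_mod_cast hτ)⟩

namespace PairType

/-- The first entry of the representatives of all pair types. -/
def fst : Equiv.Perm (Fin 6) := swap 0 1 * swap 2 3

/-- The second entry of the representative of each pair type. -/
def snd : PairType → Equiv.Perm (Fin 6)
  | three => swap 0 1 * swap 2 4
  | threeDual => swap 0 4 * swap 2 5
  | four => swap 0 2 * swap 4 5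
  | fourSwapped => swap 2 4 * swap 3 5
  | five => swap 0 2 * swap 1 4

/-- The order of the product of the entries of a pair of each type. -/
def order : PairType → ℕ
  | three => 3
  | threeDual => 3
  | four => 4
  | fourSwapped => 4
  | five => 5

/-- A set of permutations stable under conjugation by both entries of the representative, so that
its normalizer contains the pair. That normalizer is a maximal subgroup of `S₆`: for orders 3, 4
and 5 the sets are the 3-cycles of a Sylow 3-subgroup, one involution, and the transpositions
moving the point `5`. -/
def left : PairType → Finset (Equiv.Perm (Fin 6))
  | three => {swap 2 3 * swap 3 4, swap 2 4 * swap 4 3, swap 0 1 * swap 1 5, swap 0 5 * swap 5 1}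
  | threeDual =>
    {swap 0 4 * swap 4 1, swap 0 1 * swap 1 4, swap 2 5 * swap 5 3, swap 2 3 * swap 3 5}
  | four => {swap 4 5}
  | fourSwapped => {swap 0 1}
  | five => {swap 5 0, swap 5 1, swap 5 2, swap 5 3, swap 5 4}

/-- As `left`, with a second maximal subgroup of `S₆`: the sets are single involutions, and for
order 5 the image of `left` under an outer automorphism, a synthematic total. -/
def right : PairType → Finset (Equiv.Perm (Fin 6))
  | three => {swap 0 1}
  | threeDual => {swap 0 2 * swap 4 5 * swap 1 3}
  | four => {swap 4 5 * swap 0 2 * swap 1 3}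
  | fourSwapped => {swap 0 1 * swap 2 3 * swap 4 5}
  | five =>
    {swap 0 5 * swap 1 2 * swap 3 4, swap 0 2 * swap 1 4 * swap 3 5,
      swap 0 3 * swap 1 5 * swap 2 4, swap 0 1 * swap 2 3 * swap 4 5,
      swap 0 4 * swap 1 3 * swap 2 5}

/-- The first of the two maximal subgroups of `S₆` attached to a pair type. -/
def leftNormalizer (τ : PairType) : Subgroup (Equiv.Perm (Fin 6)) := normalizer τ.left

/-- The second of the two maximal subgroups of `S₆` attached to a pair type. -/
def rightNormalizer (τ : PairType) : Subgroup (Equiv.Perm (Fin 6)) := normalizer τ.right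

instance (τ : PairType) : DecidablePred (· ∈ τ.leftNormalizer) :=
  inferInstanceAs (DecidablePred (· ∈ normalizer (τ.left : Set (Equiv.Perm (Fin 6)))))

instance (τ : PairType) : DecidablePred (· ∈ τ.rightNormalizer) :=
  inferInstanceAs (DecidablePred (· ∈ normalizer (τ.right : Set (Equiv.Perm (Fin 6)))))

theorem fst_mem_alternatingGroup : fst ∈ alternatingGroup (Fin 6) :=
  Equiv.Perm.mem_alternatingGroup.mpr (by decide)

theorem snd_mem_alternatingGroup (τ : PairType) : τ.snd ∈ alternatingGroup (Fin 6) :=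
  Equiv.Perm.mem_alternatingGroup.mpr (by cases τ <;> decide)

theorem fst_mem_leftNormalizer (τ : PairType) : fst ∈ τ.leftNormalizer := by
  cases τ <;> decide +kernel

theorem fst_mem_rightNormalizer (τ : PairType) : fst ∈ τ.rightNormalizer := by
  cases τ <;> decide +kernel

theorem snd_mem_leftNormalizer (τ : PairType) : τ.snd ∈ τ.leftNormalizer := by
  cases τ <;> decide +kernel

theorem snd_mem_rightNormalizer (τ : PairType) : τ.snd ∈ τ.rightNormalizer := by
  cases τ <;> decide +kernel

theorem exists_notMem_leftNormalizer (τ : PairType) :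
    ∃ σ : doubleTranspositions, σ.1 ∉ τ.leftNormalizer := by
  cases τ <;> decide +kernel

theorem exists_notMem_rightNormalizer (τ : PairType) :
    ∃ σ : doubleTranspositions, σ.1 ∉ τ.rightNormalizer := by
  cases τ <;> decide +kernel

theorem braidEscapes (τ : PairType) :
    ∀ x : doubleTranspositions, x.1 ∉ τ.leftNormalizer → x.1 ∈ τ.rightNormalizer →
    ∀ y : doubleTranspositions, y.1 ∈ τ.leftNormalizer → y.1 ∉ τ.rightNormalizer →
      BraidEscapes fst τ.snd τ.leftNormalizer τ.rightNormalizer x y ∧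
        BraidEscapes fst τ.snd τ.leftNormalizer τ.rightNormalizer y x := by
  cases τ <;> decide +kernel

theorem exists_conj_eq_fst_snd :
    ∀ b : doubleTranspositions, fst * b ≠ b * fst →
      ∃ s : Equiv.Perm (Fin 6), s * fst * s⁻¹ = fst ∧
        ∃ τ ∈ [three, threeDual, four, fourSwapped, five], s * b * s⁻¹ = snd τ := by
  decide +kernel

theorem exists_conj_eq_fst (a : doubleTranspositions) :
    ∃ s : Equiv.Perm (Fin 6), s * a * s⁻¹ = fst := by
  have hconj : ∀ a : doubleTranspositions, ∃ s t : doubleTranspositions,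
      (s * t : Equiv.Perm (Fin 6)) * a = fst * (s * t) := by decide +kernel
  obtain ⟨s, t, hst⟩ := hconj a
  exact ⟨s * t, mul_inv_eq_iff_eq_mul.mpr hst⟩

theorem exists_conj_eq_pair {a b : Equiv.Perm (Fin 6)} (ha : a ∈ doubleTranspositions)
    (hb : b ∈ doubleTranspositions) (hab : ¬ Commute a b) :
    ∃ s τ, MulAut.conj s a = fst ∧ MulAut.conj s b = snd τ := by
  obtain ⟨s, hs⟩ := exists_conj_eq_fst ⟨a, ha⟩
  have hcomm : ¬ Commute fst (MulAut.conj s b) := by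
    rw [← hs, ← MulAut.conj_apply]
    exact fun h => hab ((commute_map_iff (MulAut.conj s).injective).mp h)
  obtain ⟨r, hr, τ, -, hτ⟩ :=
    exists_conj_eq_fst_snd ⟨_, conj_mem_doubleTranspositions hb s⟩ hcomm
  exact ⟨r * s, τ, by simp_all [mul_assoc], by simpa [mul_assoc] using hτ⟩

theorem two_lt_order (τ : PairType) : 2 < τ.order := by
  cases τ <;> decide

theorem order_le_five (τ : PairType) : τ.order ≤ 5 := by
  cases τ <;> decide

theorem orderOf_fst_mul_snd (τ : PairType) : orderOf (fst * τ.snd) = τ.order := by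
  have hpow : (fst * τ.snd) ^ τ.order = 1 ∧ ∀ m < τ.order, 0 < m → (fst * τ.snd) ^ m ≠ 1 := by
    cases τ <;> decide +kernel
  exact (orderOf_eq_iff (by cases τ <;> decide)).mpr hpow

theorem order_lt_orderOf_mul {τ : PairType} (hτ : τ ≠ five) (z : doubleTranspositions)
    (hzM : z.1 ∉ τ.leftNormalizer) (hzN : z.1 ∉ τ.rightNormalizer) :
    ∃ r ∈ [fst, τ.snd, τ.snd⁻¹ * fst * τ.snd], τ.order < orderOf (r * z) := by
  have hpow : ∀ z : doubleTranspositions, z.1 ∉ τ.leftNormalizer → z.1 ∉ τ.rightNormalizer →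
      ∃ r ∈ [fst, τ.snd, τ.snd⁻¹ * fst * τ.snd], ∀ m < τ.order, (r * z) ^ (m + 1) ≠ 1 := by
    cases τ
    case five => contradiction
    all_goals decide +kernel
  obtain ⟨r, hr, hrz⟩ := hpow z hzM hzN
  refine ⟨r, hr, not_le.mp fun hle => hrz (orderOf (r * z) - 1) ?_ ?_⟩
  · have := orderOf_pos (r * z.1)
    omega
  · rw [Nat.sub_add_cancel (orderOf_pos _), pow_orderOf_eq_one]

theorem apply_five_ne_of_notMem :
    ∀ z : doubleTranspositions, z.1 ∉ five.leftNormalizer → z.1 5 ≠ 5 := by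
  decide +kernel

theorem exists_isThreeCycle_mul_conj (z : doubleTranspositions)
    (hzM : z.1 ∉ five.leftNormalizer) (hzN : z.1 ∉ five.rightNormalizer) :
    ∃ i, (z * ((fst * five.snd) ^ i * fst * ((fst * five.snd) ^ i)⁻¹)).IsThreeCycle := by
  have hsupp : ∀ z : doubleTranspositions, z.1 ∉ five.leftNormalizer →
      z.1 ∉ five.rightNormalizer → ∃ i < 5,
        (z * ((fst * five.snd) ^ i * fst * ((fst * five.snd) ^ i)⁻¹)).support.card = 3 := by
    decide +kernel
  obtain ⟨i, -, hi⟩ := hsupp z hzM hzN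
  exact ⟨i, card_support_eq_three_iff.mp hi⟩

theorem exists_pow_fst_mul_snd_five_apply_eq :
    ∀ x ≠ 5, ∀ y ≠ 5, ∃ k, ((fst * snd five) ^ k) x = y := by
  have hlt : ∀ x ≠ 5, ∀ y ≠ 5, ∃ k < 5, ((fst * snd five) ^ k) x = y := by decide +kernel
  exact fun x hx y hy => (hlt x hx y hy).imp fun k hk => hk.2

end PairType

theorem not_isMulCommutative_alternatingGroup : ¬ IsMulCommutative (alternatingGroup (Fin 6)) := by
  intro h
  have hcomm := setLike_mul_comm PairType.fst_mem_alternatingGroup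
    PairType.three.snd_mem_alternatingGroup
  exact absurd hcomm (by decide)

end CanonicalPairs

section Ladder

open PairType

variable {l : List (Equiv.Perm (Fin 6))}

theorem exists_hurwitzMinor_fst_snd (hl : ∀ x ∈ l, x ∈ doubleTranspositions)
    {a b : Equiv.Perm (Fin 6)} (hab : HurwitzMinor [a, b] l) (hcomm : ¬ Commute a b) :
    ∃ τ, HurwitzMinor [fst, snd τ] l ∧ orderOf (a * b) = τ.order := by
  have hmem : ∀ x ∈ [a, b], x ∈ doubleTranspositions :=
    hab.forall_mem (fun _ => conj_mem_doubleTranspositions) hl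
  obtain ⟨s, τ, ha, hb⟩ := exists_conj_eq_pair (hmem a (by simp)) (hmem b (by simp)) hcomm
  refine ⟨τ, .trans ?_ hab, ?_⟩
  · simpa [ha, hb] using HurwitzMinor.map_conj s [a, b]
  · rw [← orderOf_fst_mul_snd, ← ha, ← hb, ← map_mul, MulEquiv.orderOf_eq]

theorem exists_hurwitzMinor_fst_snd_notMem (hl : ∀ x ∈ l, x ∈ doubleTranspositions)
    (hgen : Subgroup.closure {x | x ∈ l} = alternatingGroup (Fin 6)) {τ : PairType}
    (hτ : HurwitzMinor [fst, snd τ] l) :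
    ∃ z : doubleTranspositions, z.1 ∉ τ.leftNormalizer ∧ z.1 ∉ τ.rightNormalizer ∧
      HurwitzMinor [fst, snd τ, z.1] l := by
  have hnot {K : Subgroup (Equiv.Perm (Fin 6))} (hK : ∃ σ : doubleTranspositions, σ.1 ∉ K) :
      ¬ Subgroup.closure {x | x ∈ l} ≤ K := by
    obtain ⟨σ, hσ⟩ := hK
    exact fun hle => hσ (hle (hgen ▸ (mem_doubleTranspositions.mp σ.2).1))
  obtain ⟨z, hzM, hzN, hz⟩ := hτ.exists_escape (hgen ▸ inferInstance)
    (fun _ => conj_mem_doubleTranspositions) hl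
    (hnot τ.exists_notMem_leftNormalizer) (hnot τ.exists_notMem_rightNormalizer)
    τ.fst_mem_leftNormalizer τ.fst_mem_rightNormalizer
    τ.snd_mem_leftNormalizer τ.snd_mem_rightNormalizer
    fun x hx hxM hxN y hy hyM hyN => τ.braidEscapes ⟨x, hx⟩ hxM hxN ⟨y, hy⟩ hyM hyN
  have hzmem : z ∈ doubleTranspositions :=
    hz.forall_mem (fun _ => conj_mem_doubleTranspositions) hl z (by simp)
  exact ⟨⟨z, hzmem⟩, hzM, hzN, hz⟩

theorem exists_hurwitzMinor_order_lt (hl : ∀ x ∈ l, x ∈ doubleTranspositions)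
    (hgen : Subgroup.closure {x | x ∈ l} = alternatingGroup (Fin 6)) {τ : PairType}
    (hτ : HurwitzMinor [fst, snd τ] l) (hfive : τ ≠ five) :
    ∃ υ : PairType, HurwitzMinor [fst, snd υ] l ∧ τ.order < υ.order := by
  obtain ⟨z, hzM, hzN, hz⟩ := exists_hurwitzMinor_fst_snd_notMem hl hgen hτ
  obtain ⟨r, hr, hlt⟩ := order_lt_orderOf_mul hfive z hzM hzN
  have hrz : HurwitzMinor [r, z.1] l := (hurwitzMinor_pair_of_mem z.1 hr).trans hz
  have horder : ∀ x ∈ [r, z.1], orderOf x = 2 := fun x hx =>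
    (mem_doubleTranspositions.mp
      (hrz.forall_mem (fun _ => conj_mem_doubleTranspositions) hl x hx)).2
  have hcomm : ¬ Commute r z.1 := fun h => by
    have := orderOf_mul_le_two_of_commute (horder r (by simp)) (horder z (by simp)) h
    have := τ.two_lt_order
    omega
  obtain ⟨υ, hυ, hord⟩ := exists_hurwitzMinor_fst_snd hl hrz hcomm
  exact ⟨υ, hυ, hord ▸ hlt⟩

theorem hurwitzMinor_five_of_hurwitzMinor (hl : ∀ x ∈ l, x ∈ doubleTranspositions)
    (hgen : Subgroup.closure {x | x ∈ l} = alternatingGroup (Fin 6)) {τ : PairType}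
    (hτ : HurwitzMinor [fst, snd τ] l) : HurwitzMinor [fst, snd five] l := by
  by_cases hfive : τ = five
  · exact hfive ▸ hτ
  · obtain ⟨υ, hυ, hlt⟩ := exists_hurwitzMinor_order_lt hl hgen hτ hfive
    exact hurwitzMinor_five_of_hurwitzMinor hl hgen hυ
termination_by 5 - τ.order
decreasing_by
  have := υ.order_le_five
  omega

theorem hurwitzMinor_five (hl : ∀ x ∈ l, x ∈ doubleTranspositions)
    (hgen : Subgroup.closure {x | x ∈ l} = alternatingGroup (Fin 6)) :
    HurwitzMinor [fst, snd five] l := by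
  obtain ⟨a, b, hab, hcomm⟩ := exists_pair_sublist_not_commute (l := l) fun h =>
    not_isMulCommutative_alternatingGroup (hgen ▸ h)
  obtain ⟨τ, hτ, -⟩ := exists_hurwitzMinor_fst_snd hl ((BraidsTo.refl l).hurwitzMinor hab) hcomm
  exact hurwitzMinor_five_of_hurwitzMinor hl hgen hτ

end Ladder

section Generation

open PairType

theorem closure_five_eq_alternatingGroup (z : doubleTranspositions)
    (hzM : z.1 ∉ five.leftNormalizer) (hzN : z.1 ∉ five.rightNormalizer) :
    Subgroup.closure {fst, snd five, z.1} = alternatingGroup (Fin 6) := by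
  set K := Subgroup.closure {fst, snd five, z.1}
  refine le_antisymm ((Subgroup.closure_le _).mpr ?_) ?_
  · rintro x (rfl | rfl | rfl)
    exacts [fst_mem_alternatingGroup, five.snd_mem_alternatingGroup,
      (mem_doubleTranspositions.mp z.2).1]
  have hfst : fst ∈ K := Subgroup.subset_closure (by simp)
  have hz : z.1 ∈ K := Subgroup.subset_closure (by simp)
  have hr : fst * snd five ∈ K := mul_mem hfst (Subgroup.subset_closure (by simp))
  have hprim : MulAction.IsPreprimitive K (Fin 6) :=
    isPreprimitive_of_pow_smul (r := ⟨_, hr⟩) (z := ⟨_, hz⟩) (o := 5)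
      (show (fst * snd five) 5 = 5 by decide) exists_pow_fst_mul_snd_five_apply_eq
      (apply_five_ne_of_notMem z hzM)
  obtain ⟨i, hi⟩ := exists_isThreeCycle_mul_conj z hzM hzN
  exact Equiv.Perm.alternatingGroup_le_of_isPreprimitive_of_isThreeCycle_mem hprim hi
    (mul_mem hz (mul_mem (mul_mem (pow_mem hr i) hfst) (inv_mem (pow_mem hr i))))

end Generation

/-- Every tuple of `n ≥ 4` order-2 elements of `A₆` generating `A₆` is
Hurwitz-equivalent to a tuple three of whose entries generate `A₆`. -/
theorem stmt_10 (n : ℕ) (hn : 4 ≤ n) (g : Fin n → Equiv.Perm (Fin 6))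
    (hmem : ∀ i, g i ∈ alternatingGroup (Fin 6))
    (hord : ∀ i, orderOf (g i) = 2)
    (hgen : Subgroup.closure (Set.range g) = alternatingGroup (Fin 6)) :
    ∃ h : Fin n → Equiv.Perm (Fin 6), HurwitzEquiv g h ∧
      ∃ i j l : Fin n, i < j ∧ j < l ∧
        Subgroup.closure ({h i, h j, h l} : Set (Equiv.Perm (Fin 6)))
          = alternatingGroup (Fin 6) := by
  have hdouble : ∀ x ∈ List.ofFn g, x ∈ doubleTranspositions := by
    simpa [List.mem_ofFn, mem_doubleTranspositions] using fun i => ⟨hmem i, hord i⟩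
  have hclosure : Subgroup.closure {x | x ∈ List.ofFn g} = alternatingGroup (Fin 6) := by
    simp only [List.mem_ofFn]
    exact hgen
  obtain ⟨z, hzM, hzN, hz⟩ := exists_hurwitzMinor_fst_snd_notMem hdouble hclosure
    (hurwitzMinor_five hdouble hclosure)
  obtain ⟨s, h, hgh, hs⟩ := hz.exists_hurwitzEquiv
  obtain ⟨i, j, l, hij, hjl, hi, hj, hl⟩ := exists_lt_lt_of_sublist_ofFn hs
  refine ⟨h, hgh, i, j, l, hij, hjl, ?_⟩
  rw [hi, hj, hl]
  simpa only [Set.image_insert_eq, Set.image_singleton] using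
    closure_conj_image_eq (closure_five_eq_alternatingGroup z hzM hzN) s
end

section
/- Let (g_1, g_2, g_3, g_4, g_5) be a 5-tuple of order-2 elements of the alternating group A6 on 6 letters. Then there exists a tuple (h_1,…,h_5) Hurwitz-equivalent to (g_1,…,g_5) and indices i ≠ j such that h_i and h_j have the same set of fixed points. -/
/-!
A double transposition of six letters has two fixed points, so two of any four share one. Hurwitz
moves bring such a pair to the front of the tuple. If its fixed point sets differ, both entries lie
in a common point stabilizer `A₅`, and up to conjugation in `S₆` the pair is `(0 1)(2 3)` followed
by `(0 1)(2 4)` or by `(0 2)(1 4)`, with product a 3-cycle or a 5-cycle. From each of these two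
pairs a finite search shows that, whatever the next three entries are, Hurwitz moves produce two
entries with the same fixed points.

The search records a transposition as a bit mask of two letters; conjugating by another
transposition is then a transvection over `𝔽₂`, and two double transpositions have the same fixed
points if and only if the sums of their masks agree.
-/

open Equiv Equiv.Perm

section Braid

variable {α β : Type*} {conj : α → α → α} {conj' : β → β → β}

/-- The Hurwitz move at positions `i` and `i + 1` of a list (counted from `0`), where `conj a b`
plays the role of `b⁻¹ * a * b`; lists that are too short are left alone. The operation `conj` is a
parameter so that the same move acts on permutations and on their numerical codes. -/
def hurwitzMoveAt (conj : α → α → α) : ℕ → List α → List α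
  | 0, a :: b :: l => b :: conj a b :: l
  | i + 1, a :: l => a :: hurwitzMoveAt conj i l
  | _, l => l

/-- The action of a positive braid word on lists: the Hurwitz moves at the positions listed in `w`
are performed from left to right. -/
def braid (conj : α → α → α) (w : List ℕ) (l : List α) : List α :=
  w.foldl (fun l i => hurwitzMoveAt conj i l) l

theorem braid_cons (i : ℕ) (w : List ℕ) (l : List α) :
    braid conj (i :: w) l = braid conj w (hurwitzMoveAt conj i l) := rfl

theorem braid_append_word (v w : List ℕ) (l : List α) :
    braid conj (v ++ w) l = braid conj w (braid conj v l) :=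
  List.foldl_append

theorem length_hurwitzMoveAt (i : ℕ) (l : List α) : (hurwitzMoveAt conj i l).length = l.length := by
  fun_induction hurwitzMoveAt <;> simp [*]

theorem length_braid (w : List ℕ) (l : List α) : (braid conj w l).length = l.length := by
  induction w generalizing l with
  | nil => rfl
  | cons i w ih => rw [braid_cons, ih, length_hurwitzMoveAt]

theorem hurwitzMoveAt_of_length_le {i : ℕ} {l : List α} (h : l.length ≤ i + 1) :
    hurwitzMoveAt conj i l = l := by
  induction i generalizing l with
  | zero => rcases l with _ | ⟨a, _ | ⟨b, l⟩⟩ <;> simp_all [hurwitzMoveAt]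
  | succ i ih => cases l <;> simp_all [hurwitzMoveAt]

theorem hurwitzMoveAt_eq_set {i : ℕ} {l : List α} (h : i + 1 < l.length) :
    hurwitzMoveAt conj i l = (l.set i l[i + 1]).set (i + 1) (conj l[i] l[i + 1]) := by
  induction i generalizing l with
  | zero => rcases l with _ | ⟨a, _ | ⟨b, l⟩⟩ <;> simp [hurwitzMoveAt] at h ⊢
  | succ i ih =>
    rcases l with _ | ⟨a, l⟩
    · simp at h
    · simpa [hurwitzMoveAt] using ih (by simpa using h)

theorem hurwitzMoveAt_append {i : ℕ} {l : List α} (h : i + 1 < l.length) (r : List α) :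
    hurwitzMoveAt conj i (l ++ r) = hurwitzMoveAt conj i l ++ r := by
  induction i generalizing l with
  | zero => rcases l with _ | ⟨a, _ | ⟨b, l⟩⟩ <;> simp_all [hurwitzMoveAt]
  | succ i ih => cases l <;> simp_all [hurwitzMoveAt]

theorem exists_braid_append (w : List ℕ) (l r : List α) :
    ∃ v, braid conj v (l ++ r) = braid conj w l ++ r := by
  induction w generalizing l with
  | nil => exact ⟨[], rfl⟩
  | cons i w ih =>
    obtain ⟨v, hv⟩ := ih (hurwitzMoveAt conj i l)
    rcases lt_or_ge (i + 1) l.length with hi | hi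
    · exact ⟨i :: v, by rw [braid_cons, hurwitzMoveAt_append hi, hv, braid_cons]⟩
    · exact ⟨v, by rw [braid_cons, ← hv, hurwitzMoveAt_of_length_le hi]⟩

theorem braid_map_succ_cons (w : List ℕ) (a : α) (l : List α) :
    braid conj (w.map (· + 1)) (a :: l) = a :: braid conj w l := by
  induction w generalizing l with
  | nil => rfl
  | cons _ _ ih => exact ih _

theorem exists_braid_cons_append (a : α) (s t : List α) :
    ∃ w t', braid conj w (a :: (s ++ t)) = s ++ t' := by
  induction s generalizing a with
  | nil => exact ⟨[], a :: t, rfl⟩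
  | cons b s ih =>
    obtain ⟨w, t', hw⟩ := ih (conj a b)
    exact ⟨0 :: w.map (· + 1), t', by
      rw [braid_cons, List.cons_append, hurwitzMoveAt, braid_map_succ_cons, hw, List.cons_append]⟩

-- An entry moving to the left is unchanged; only the entries it passes are conjugated.
theorem exists_braid_eq_append_of_sublist {s l : List α} (h : s.Sublist l) :
    ∃ w t, braid conj w l = s ++ t := by
  induction h with
  | slnil => exact ⟨[], [], rfl⟩
  | cons a _ ih =>
    obtain ⟨w, t, hw⟩ := ih
    obtain ⟨v, t', hv⟩ := exists_braid_cons_append (conj := conj) a _ t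
    exact ⟨w.map (· + 1) ++ v, t', by rw [braid_append_word, braid_map_succ_cons, hw, hv]⟩
  | cons_cons a _ ih =>
    obtain ⟨w, t, hw⟩ := ih
    exact ⟨w.map (· + 1), t, by rw [braid_map_succ_cons, hw, List.cons_append]⟩

theorem forall₂_hurwitzMoveAt {R : α → β → Prop}
    (hR : ∀ {a b a' b'}, R a a' → R b b' → R (conj a b) (conj' a' b')) (i : ℕ) {l : List α}
    {l' : List β} (h : List.Forall₂ R l l') :
    List.Forall₂ R (hurwitzMoveAt conj i l) (hurwitzMoveAt conj' i l') := by
  induction i generalizing l l' with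
  | zero =>
    rcases h with _ | ⟨ha, _ | ⟨hb, h⟩⟩
    · exact .nil
    · exact .cons ha .nil
    · exact .cons hb (.cons (hR ha hb) h)
  | succ i ih =>
    rcases h with _ | ⟨ha, h⟩
    · exact .nil
    · exact .cons ha (ih h)

theorem forall₂_braid {R : α → β → Prop}
    (hR : ∀ {a b a' b'}, R a a' → R b b' → R (conj a b) (conj' a' b')) (w : List ℕ) {l : List α}
    {l' : List β} (h : List.Forall₂ R l l') :
    List.Forall₂ R (braid conj w l) (braid conj' w l') := by
  induction w generalizing l l' with
  | nil => exact h
  | cons i _ ih => exact ih (forall₂_hurwitzMoveAt hR i h)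

theorem braid_map {f : α → β} (hf : ∀ a b, f (conj a b) = conj' (f a) (f b)) (w : List ℕ)
    (l : List α) : braid conj' w (l.map f) = (braid conj w l).map f := by
  have h : List.Forall₂ (fun a b => f a = b) l (l.map f) := by simp
  have := forall₂_braid (conj := conj) (conj' := conj')
    (by rintro a b _ _ rfl rfl; exact hf a b) w h
  rwa [← List.forall₂_map_left_iff, List.forall₂_eq_eq_eq, eq_comm] at this

theorem forall_mem_braid {P : α → Prop} (hP : ∀ {a b}, P a → P b → P (conj a b)) (w : List ℕ)
    {l : List α} (h : ∀ a ∈ l, P a) : ∀ a ∈ braid conj w l, P a :=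
  List.forall₂_same (Rₐ := fun a _ => P a) |>.mp
    (forall₂_braid (conj' := conj) hP w (List.forall₂_same.mpr h))

end Braid

section HurwitzEquiv

variable {G : Type*} [Group G] {k : ℕ}

/-- The conjugation `b⁻¹ * a * b` occurring in the Hurwitz moves on tuples of a group. -/
def rightConj (a b : G) : G := b⁻¹ * a * b

theorem rightConj_rightConj (a b s : G) :
    rightConj (rightConj a b) s = rightConj (rightConj a s) (rightConj b s) := by
  simp only [rightConj]; group

theorem rightConj_mul (a s t : G) : rightConj a (s * t) = rightConj (rightConj a s) t := by
  simp only [rightConj]; group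

theorem ofFn_update_eq_set {α : Type*} (g : Fin k → α) (i : Fin k) (a : α) :
    List.ofFn (Function.update g i a) = (List.ofFn g).set i a := by
  refine List.ext_getElem (by simp) fun j _ _ => ?_
  simp [List.getElem_set, Function.update_apply, Fin.ext_iff, eq_comm]

theorem exists_hurwitzEquiv_ofFn_eq_hurwitzMoveAt (i : ℕ) (g : Fin k → G) :
    ∃ h, HurwitzEquiv g h ∧ List.ofFn h = hurwitzMoveAt rightConj i (List.ofFn g) := by
  rcases lt_or_ge (i + 1) k with hi | hi
  · have hi' := Nat.lt_of_succ_lt hi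
    refine ⟨Function.update (Function.update g ⟨i, hi'⟩ (g ⟨i + 1, hi⟩)) ⟨i + 1, hi⟩
      (rightConj (g ⟨i, hi'⟩) (g ⟨i + 1, hi⟩)), .rel _ _ ⟨i, hi, ?_, ?_, ?_⟩, ?_⟩
    · simp
    · simp [rightConj]
    · intro j hj hj'
      simp [Fin.ext_iff, hj, hj']
    · simp [hurwitzMoveAt_eq_set, ofFn_update_eq_set, hi]
  · exact ⟨g, .refl g, (hurwitzMoveAt_of_length_le (by simpa using hi)).symm⟩

theorem exists_hurwitzEquiv_ofFn_eq_braid (w : List ℕ) (g : Fin k → G) :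
    ∃ h, HurwitzEquiv g h ∧ List.ofFn h = braid rightConj w (List.ofFn g) := by
  induction w generalizing g with
  | nil => exact ⟨g, .refl g, rfl⟩
  | cons i w ih =>
    obtain ⟨g', hg', hi⟩ := exists_hurwitzEquiv_ofFn_eq_hurwitzMoveAt i g
    obtain ⟨h, hh, hw⟩ := ih g'
    exact ⟨h, hg'.trans _ _ _ hh, by rw [hw, hi, braid_cons]⟩

end HurwitzEquiv

section Collision

variable {n : ℕ} {l : List (Perm (Fin n))}

/-- A list of permutations collides if some positive braid word moves it to a list two of whose
entries have the same set of fixed points. -/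
def HurwitzCollides (l : List (Perm (Fin n))) : Prop :=
  ∃ w, ¬ ((braid rightConj w l).map FixedPts).Nodup

theorem HurwitzCollides.of_braid {w : List ℕ} (h : HurwitzCollides (braid rightConj w l)) :
    HurwitzCollides l := by
  obtain ⟨v, hv⟩ := h
  exact ⟨w ++ v, by rwa [braid_append_word]⟩

theorem HurwitzCollides.append (h : HurwitzCollides l) (r : List (Perm (Fin n))) :
    HurwitzCollides (l ++ r) := by
  obtain ⟨w, hw⟩ := h
  obtain ⟨v, hv⟩ := exists_braid_append (conj := rightConj) w l r
  refine ⟨v, fun hd => hw ?_⟩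
  rw [hv, List.map_append] at hd
  exact hd.of_append_left

theorem fixedPts_rightConj (σ s : Perm (Fin n)) :
    FixedPts (rightConj σ s) = s ⁻¹' FixedPts σ := by
  ext x
  simp [FixedPts, rightConj, Equiv.symm_apply_eq]

theorem HurwitzCollides.of_map_rightConj {s : Perm (Fin n)}
    (h : HurwitzCollides (l.map (rightConj · s))) : HurwitzCollides l := by
  obtain ⟨w, hw⟩ := h
  refine ⟨w, fun hd => hw ?_⟩
  rw [braid_map fun a b => rightConj_rightConj a b s, List.map_map]
  have : FixedPts ∘ (rightConj · s) = (s ⁻¹' ·) ∘ FixedPts := funext fun σ => fixedPts_rightConj σ s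
  rw [this, ← List.map_map]
  exact hd.map s.surjective.preimage_injective

end Collision

section DoubleTransposition

theorem cycleType_rightConj {α : Type*} [Fintype α] [DecidableEq α] (σ s : Perm α) :
    (rightConj σ s).cycleType = σ.cycleType := by
  simpa [rightConj] using cycleType_conj (σ := σ) (τ := s⁻¹)

theorem cycleType_eq_of_orderOf_eq_two {σ : Perm (Fin 6)} (hmem : σ ∈ alternatingGroup (Fin 6))
    (hord : orderOf σ = 2) : σ.cycleType = {2, 2} := by
  obtain ⟨m, hm⟩ := cycleType_prime_order (σ := σ) (hord ▸ Nat.prime_two)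
  rw [hord] at hm
  have hsum := sum_cycleType_le σ
  have hsign := sign_of_cycleType σ
  rw [mem_alternatingGroup.mp hmem, hm] at hsign
  rw [hm] at hsum ⊢
  have : m ≤ 2 := by simp at hsum; omega
  interval_cases m
  · revert hsign; decide
  · rfl
  · revert hsign; decide

theorem exists_rightConj_eq {α : Type*} [Fintype α] [DecidableEq α] {σ τ : Perm α}
    (h : σ.cycleType = τ.cycleType) : ∃ s, rightConj σ s = τ := by
  obtain ⟨c, hc⟩ := isConj_iff.mp (isConj_iff_cycleType_eq.mpr h)
  exact ⟨c⁻¹, by simpa [rightConj] using hc⟩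

theorem exists_eq_swap_mul_swap {α : Type*} [Fintype α] [DecidableEq α] {σ : Perm α}
    (h : σ.cycleType = {2, 2}) :
    ∃ i j k l, [i, j, k, l].Nodup ∧ σ = swap i j * swap k l := by
  have hcard : Fintype.card (Fin 4) ≤ Fintype.card α := by
    simpa [h] using sum_cycleType_le σ
  obtain ⟨e⟩ := Function.Embedding.nonempty_of_card_le hcard
  have hnodup (f : Fin 4 ↪ α) : [f 0, f 1, f 2, f 3].Nodup := by simp
  obtain ⟨s, hs⟩ := exists_rightConj_eq ((cycleType_swap_mul_swap_of_nodup (hnodup e)).trans h.symm)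
  refine ⟨s⁻¹ (e 0), s⁻¹ (e 1), s⁻¹ (e 2), s⁻¹ (e 3), hnodup (e.trans s⁻¹.toEmbedding), ?_⟩
  rw [← hs, swap_apply_apply, swap_apply_apply, rightConj]
  group

theorem sum_card_le_card_of_pairwise_disjoint {ι α : Type*} [Fintype α] (f : ι → Finset α)
    {l : List ι} (h : l.Pairwise fun a b => Disjoint (f a) (f b)) :
    (l.map fun a => (f a).card).sum ≤ Fintype.card α := by
  have hnodup : (l.flatMap fun a => (f a).toList).Nodup :=
    List.nodup_flatMap.mpr ⟨fun a _ => (f a).nodup_toList, h.imp fun hab => by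
      simpa [Function.onFun, List.Disjoint, Finset.disjoint_left] using hab⟩
  simpa [List.length_flatMap] using hnodup.length_le_card

-- Each entry has two fixed points, and there are only six letters.
theorem exists_sublist_common_fixed_point {l : List (Perm (Fin 6))} (hl : 4 ≤ l.length)
    (h : ∀ σ ∈ l, σ.cycleType = {2, 2}) :
    ∃ σ τ, [σ, τ].Sublist l ∧ ∃ x, σ x = x ∧ τ x = x := by
  by_contra! hne
  have hdisj : l.Pairwise fun σ τ => Disjoint σ.supportᶜ τ.supportᶜ :=
    List.pairwise_iff_forall_sublist.mpr fun {σ τ} hs =>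
      Finset.disjoint_left.mpr fun x hσ hτ => hne σ τ hs x (by simpa using hσ) (by simpa using hτ)
  have hcard : ∀ σ ∈ l, σ.supportᶜ.card = 2 := fun σ hσ => by
    rw [Finset.card_compl, ← sum_cycleType, h σ hσ]; rfl
  have := sum_card_le_card_of_pairwise_disjoint _ hdisj
  rw [List.map_congr_left hcard, List.map_const', List.sum_replicate, Fintype.card_fin,
    smul_eq_mul] at this
  omega

end DoubleTransposition

section Code

/-- The bit mask of the pair `{i, j}` of letters; it encodes the transposition `(i j)`. -/
def pairMask (i j : ℕ) : ℕ := 2 ^ i ^^^ 2 ^ j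

/-- The mask of the image of the pair with mask `m` under the transposition of the pair with mask
`u`: if the two pairs meet in one letter, it is their symmetric difference. The functions on `Nat`
are those which the kernel evaluates natively. -/
def swapMask (u m : ℕ) : ℕ :=
  bif Nat.beq (Nat.land m u) 0 || Nat.beq m u then m else Nat.xor m u

/-- The conjugation `d⁻¹ * c * d` on codes, where the code of `(i j)(k l)` is the pair of masks of
`{i, j}` and `{k, l}`. -/
def conjCode (c d : ℕ × ℕ) : ℕ × ℕ :=
  (swapMask d.2 (swapMask d.1 c.1), swapMask d.2 (swapMask d.1 c.2))

/-- The mask of the letters moved by the double transposition with code `c`. -/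
def supportMask (c : ℕ × ℕ) : ℕ := Nat.xor c.1 c.2

/-- `c` is a code of the double transposition `σ`; the two masks may come in either order. -/
def IsCode (c : ℕ × ℕ) (σ : Perm (Fin 6)) : Prop :=
  ∃ i j k l : Fin 6, [i, j, k, l].Nodup ∧ c = (pairMask i j, pairMask k l) ∧ σ = swap i j * swap k l

theorem isCode_pairMask {i j k l : Fin 6} (h : [i, j, k, l].Nodup) :
    IsCode (pairMask i j, pairMask k l) (swap i j * swap k l) :=
  ⟨i, j, k, l, h, rfl, rfl⟩

theorem swapMask_pairMask : ∀ {i j k l : Fin 6}, i ≠ j → k ≠ l →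
    swapMask (pairMask i j) (pairMask k l) = pairMask (swap i j k) (swap i j l) := by
  decide +kernel

theorem rightConj_swap_mul_swap {α : Type*} [DecidableEq α] (i j k l : α) (s : Perm α) :
    rightConj (swap i j * swap k l) s = swap (s⁻¹ i) (s⁻¹ j) * swap (s⁻¹ k) (s⁻¹ l) := by
  rw [swap_apply_apply, swap_apply_apply, rightConj]; group

theorem IsCode.conj {c d : ℕ × ℕ} {σ τ : Perm (Fin 6)} (hc : IsCode c σ) (hd : IsCode d τ) :
    IsCode (conjCode c d) (rightConj σ τ) := by
  obtain ⟨i, j, k, l, hσ, rfl, rfl⟩ := hc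
  obtain ⟨m, n, p, q, hτ, rfl, rfl⟩ := hd
  set τ := swap m n * swap p q with hτ_def
  have hinv (x : Fin 6) : τ⁻¹ x = swap p q (swap m n x) := by simp [hτ_def, mul_inv_rev]
  refine ⟨τ⁻¹ i, τ⁻¹ j, τ⁻¹ k, τ⁻¹ l, hσ.map τ⁻¹.injective, ?_, rightConj_swap_mul_swap ..⟩
  have hmn : m ≠ n := by simp_all
  have hpq : p ≠ q := by simp_all
  have hij : i ≠ j := by simp_all
  have hkl : k ≠ l := by simp_all
  simp only [conjCode, hinv]
  rw [swapMask_pairMask hmn hij, swapMask_pairMask hmn hkl,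
    swapMask_pairMask hpq ((swap m n).injective.ne hij),
    swapMask_pairMask hpq ((swap m n).injective.ne hkl)]

theorem swap_mul_swap_apply_eq_self_iff_testBit : ∀ {i j k l : Fin 6}, [i, j, k, l].Nodup →
    ∀ x : Fin 6, (swap i j * swap k l) x = x ↔
      (supportMask (pairMask i j, pairMask k l)).testBit x = false := by
  decide +kernel

theorem IsCode.fixedPts_eq {c d : ℕ × ℕ} {σ τ : Perm (Fin 6)} (hc : IsCode c σ) (hd : IsCode d τ)
    (h : supportMask c = supportMask d) : FixedPts σ = FixedPts τ := by
  obtain ⟨i, j, k, l, hσ, rfl, rfl⟩ := hc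
  obtain ⟨m, n, p, q, hτ, rfl, rfl⟩ := hd
  ext x
  simp only [FixedPts, Set.mem_ofPred_eq, swap_mul_swap_apply_eq_self_iff_testBit hσ,
    swap_mul_swap_apply_eq_self_iff_testBit hτ, h]

/-- One code for each of the 45 double transpositions. -/
def codes : List (ℕ × ℕ) :=
  let pairs := (List.range 6).flatMap fun j => (List.range j).map (pairMask · j)
  (pairs ×ˢ pairs).filter fun c => Nat.blt c.1 c.2 && Nat.beq (Nat.land c.1 c.2) 0

theorem pairMask_mem_codes : ∀ {i j k l : Fin 6}, [i, j, k, l].Nodup →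
    (pairMask i j, pairMask k l) ∈ codes ∨ (pairMask k l, pairMask i j) ∈ codes := by
  decide +kernel

theorem exists_mem_codes {σ : Perm (Fin 6)} (h : σ.cycleType = {2, 2}) :
    ∃ c ∈ codes, IsCode c σ := by
  obtain ⟨i, j, k, l, hσ, rfl⟩ := exists_eq_swap_mul_swap h
  rcases pairMask_mem_codes hσ with hc | hc
  · exact ⟨_, hc, isCode_pairMask hσ⟩
  · exact ⟨_, hc, k, l, i, j, List.perm_append_comm (l₁ := [i, j]) |>.nodup_iff.mp hσ, rfl,
      (disjoint_swap_swap hσ).commute.eq⟩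

end Code

section NormalForm

-- The conjugating permutations run through the centralizer of `(0 1)(2 3)`.
theorem exists_centralizing_rightConj_eq_normal_form : ∀ {i j k l : Fin 6}, [i, j, k, l].Nodup →
    (∃ x, (swap 0 1 * swap 2 3 : Perm (Fin 6)) x = x ∧ (swap i j * swap k l) x = x) →
    (∃ x, ¬ ((swap 0 1 * swap 2 3 : Perm (Fin 6)) x = x ↔ (swap i j * swap k l) x = x)) →
    ∃ s₁ ∈ [1, swap 0 1], ∃ s₂ ∈ [1, swap 2 3], ∃ s₃ ∈ [1, swap 4 5],
      ∃ s₄ ∈ [1, swap 0 2 * swap 1 3],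
        rightConj (swap 0 1 * swap 2 3) (s₁ * s₂ * s₃ * s₄) = swap 0 1 * swap 2 3 ∧
        (rightConj (swap i j * swap k l) (s₁ * s₂ * s₃ * s₄) = swap 0 1 * swap 2 4 ∨
          rightConj (swap i j * swap k l) (s₁ * s₂ * s₃ * s₄) = swap 0 2 * swap 1 4) := by
  decide +kernel

theorem exists_rightConj_eq_normal_form {σ τ : Perm (Fin 6)} (hσ : σ.cycleType = {2, 2})
    (hτ : τ.cycleType = {2, 2}) (hfix : ∃ x, σ x = x ∧ τ x = x) (hne : FixedPts σ ≠ FixedPts τ) :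
    ∃ s, rightConj σ s = swap 0 1 * swap 2 3 ∧
      (rightConj τ s = swap 0 1 * swap 2 4 ∨ rightConj τ s = swap 0 2 * swap 1 4) := by
  obtain ⟨s, hs⟩ := exists_rightConj_eq (hσ.trans
    (cycleType_swap_mul_swap_of_nodup (by decide : [(0 : Fin 6), 1, 2, 3].Nodup)).symm)
  obtain ⟨i, j, k, l, hnodup, hl⟩ := exists_eq_swap_mul_swap ((cycleType_rightConj τ s).trans hτ)
  have hmem (ρ : Perm (Fin 6)) (x : Fin 6) : rightConj ρ s x = x ↔ ρ (s x) = s x := by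
    simpa [FixedPts] using Set.ext_iff.mp (fixedPts_rightConj ρ s) x
  obtain ⟨x, hσx, hτx⟩ := hfix
  obtain ⟨y, hy⟩ : ∃ y, ¬ (σ y = y ↔ τ y = y) := by
    simpa [FixedPts, Set.ext_iff] using hne
  obtain ⟨s₁, -, s₂, -, s₃, -, s₄, -, h₁, h₂⟩ := exists_centralizing_rightConj_eq_normal_form hnodup
    ⟨s⁻¹ x, by rw [← hs, ← hl, hmem, hmem]; simp [hσx, hτx]⟩
    ⟨s⁻¹ y, by rw [← hs, ← hl, hmem, hmem]; simpa using hy⟩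
  refine ⟨s * (s₁ * s₂ * s₃ * s₄), ?_⟩
  rw [rightConj_mul σ, rightConj_mul τ, hs, hl]
  exact ⟨h₁, h₂⟩

end NormalForm

section Search

/-- Detects two double transpositions moving the same letters in a list of codes, given the set of
the support masks already met; this set is `seen`, read as a bit mask. -/
def hasRepeat : List (ℕ × ℕ) → ℕ → Bool
  | [], _ => false
  | c :: l, seen =>
    bif Nat.beq (Nat.land seen (Nat.pow 2 (supportMask c))) 0 then
      hasRepeat l (Nat.lor seen (Nat.pow 2 (supportMask c)))
    else true

/-- The braid word passes through a list satisfying `hasRepeat`. -/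
def walk : List ℕ → List (ℕ × ℕ) → Bool
  | [], l => hasRepeat l 0
  | i :: w, l => hasRepeat l 0 || walk w (hurwitzMoveAt conjCode i l)

/-- However codes are appended to `c`, one for each word in `ws`, at some stage `walk` succeeds
along the word of that stage. -/
def search : List (List ℕ) → List (ℕ × ℕ) → Bool
  | [], _ => false
  | w :: ws, c => codes.all fun x => walk w (c ++ [x]) || search ws (c ++ [x])

variable {c : List (ℕ × ℕ)} {l : List (Perm (Fin 6))}

theorem testBit_or_not_nodup_of_hasRepeat {seen : ℕ} (h : hasRepeat c seen)
    (hcl : List.Forall₂ IsCode c l) :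
    (∃ d ∈ c, seen.testBit (supportMask d)) ∨ ¬ (l.map FixedPts).Nodup := by
  induction hcl generalizing seen with
  | nil => simp [hasRepeat] at h
  | @cons a σ c l ha hcl ih =>
    by_cases hbit : seen.testBit (supportMask a)
    · exact .inl ⟨a, List.mem_cons_self, hbit⟩
    have hland : Nat.land seen (Nat.pow 2 (supportMask a)) = 0 := by
      simpa [hbit] using Nat.and_two_pow seen (supportMask a)
    rw [hasRepeat, hland] at h
    rw [List.map_cons, List.nodup_cons]
    rcases ih h with ⟨d, hd, hdbit⟩ | hnodup
    · have hd_seen := (Nat.testBit_or seen (2 ^ supportMask a) (supportMask d)).symm.trans hdbit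
      rw [Bool.or_eq_true, Nat.testBit_two_pow, decide_eq_true_eq] at hd_seen
      rcases hd_seen with hdbit | had
      · exact .inl ⟨d, List.mem_cons_of_mem a hd, hdbit⟩
      · obtain ⟨n, hn, rfl⟩ := List.getElem_of_mem hd
        exact .inr fun hσ => hσ.1 (List.mem_map.mpr
          ⟨l[n]'(hcl.length_eq ▸ hn), List.getElem_mem _, (hcl.get hn _).fixedPts_eq ha had.symm⟩)
    · exact .inr fun hσ => hnodup hσ.2

theorem not_nodup_of_hasRepeat (h : hasRepeat c 0) (hcl : List.Forall₂ IsCode c l) :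
    ¬ (l.map FixedPts).Nodup := by
  simpa using testBit_or_not_nodup_of_hasRepeat h hcl

theorem hurwitzCollides_of_walk {w : List ℕ} (h : walk w c) (hcl : List.Forall₂ IsCode c l) :
    HurwitzCollides l := by
  induction w generalizing c l with
  | nil => exact ⟨[], not_nodup_of_hasRepeat h hcl⟩
  | cons i w ih =>
    rcases Bool.or_eq_true _ _ ▸ h with h | h
    · exact ⟨[], not_nodup_of_hasRepeat h hcl⟩
    · exact .of_braid (w := [i]) (ih h (forall₂_hurwitzMoveAt .conj i hcl))

theorem hurwitzCollides_of_search {ws : List (List ℕ)} {r : List (Perm (Fin 6))}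
    (h : search ws c) (hcl : List.Forall₂ IsCode c l) (hr : ∀ σ ∈ r, σ.cycleType = {2, 2})
    (hlen : ws.length ≤ r.length) : HurwitzCollides (l ++ r) := by
  induction ws generalizing c l r with
  | nil => simp [search] at h
  | cons w ws ih =>
    obtain _ | ⟨σ, r⟩ := r
    · simp at hlen
    obtain ⟨x, hx, hxσ⟩ := exists_mem_codes (hr σ List.mem_cons_self)
    have hcl' := List.rel_append hcl (.cons hxσ .nil)
    rw [List.append_cons]
    rcases Bool.or_eq_true _ _ ▸ List.all_eq_true.mp h x hx with h | h
    · exact (hurwitzCollides_of_walk h hcl').append r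
    · exact ih h hcl' (fun τ hτ => hr τ (List.mem_cons_of_mem σ hτ)) (by simpa using hlen)

/-- Braid words on three, four and five strands for `search`, found by computer. -/
def searchWords : List (List ℕ) :=
  [(List.replicate 2 [0, 1, 1, 0, 0]).flatten, (List.replicate 10 [2, 0, 2, 0, 0, 1]).flatten,
    (List.replicate 6 [3, 0, 1, 2, 2]).flatten]

set_option maxRecDepth 10000 in
theorem search_product_three_cycle :
    search searchWords [(pairMask 0 1, pairMask 2 3), (pairMask 0 1, pairMask 2 4)] := by
  decide +kernel

set_option maxRecDepth 10000 in
theorem search_product_five_cycle :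
    search searchWords [(pairMask 0 1, pairMask 2 3), (pairMask 0 2, pairMask 1 4)] := by
  decide +kernel

end Search

theorem hurwitzCollides_of_normal_form {τ : Perm (Fin 6)} {r : List (Perm (Fin 6))}
    (hτ : τ = swap 0 1 * swap 2 4 ∨ τ = swap 0 2 * swap 1 4)
    (hr : ∀ σ ∈ r, σ.cycleType = {2, 2}) (hlen : 3 ≤ r.length) :
    HurwitzCollides ([swap 0 1 * swap 2 3, τ] ++ r) := by
  have h₀ : IsCode _ (swap 0 1 * swap 2 3) := isCode_pairMask (by decide)
  have h₃ : IsCode _ (swap 0 1 * swap 2 4) := isCode_pairMask (by decide)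
  have h₅ : IsCode _ (swap 0 2 * swap 1 4) := isCode_pairMask (by decide)
  rcases hτ with rfl | rfl
  · exact hurwitzCollides_of_search search_product_three_cycle
      (.cons h₀ (.cons h₃ .nil)) hr hlen
  · exact hurwitzCollides_of_search search_product_five_cycle
      (.cons h₀ (.cons h₅ .nil)) hr hlen

theorem hurwitzCollides_of_five_le_length {l : List (Perm (Fin 6))} (hl : 5 ≤ l.length)
    (h : ∀ σ ∈ l, σ.cycleType = {2, 2}) : HurwitzCollides l := by
  obtain ⟨σ, τ, hsub, hfix⟩ := exists_sublist_common_fixed_point (by omega) h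
  obtain ⟨w, r, hw⟩ := exists_braid_eq_append_of_sublist (conj := rightConj) hsub
  have hlen : 3 ≤ r.length := by
    have : l.length = r.length + 2 := by simpa [length_braid] using congrArg List.length hw
    omega
  have hr : ∀ ρ ∈ r, ρ.cycleType = {2, 2} := fun ρ hρ =>
    forall_mem_braid (P := fun ρ : Perm (Fin 6) => ρ.cycleType = {2, 2})
      (fun {a b} ha _ => (cycleType_rightConj a b).trans ha) w h ρ
      (hw ▸ List.mem_append_right _ hρ)
  refine .of_braid (w := w) (hw ▸ ?_)
  by_cases heq : FixedPts σ = FixedPts τ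
  · exact HurwitzCollides.append ⟨[], by simp [braid, heq]⟩ r
  obtain ⟨s, hσ, hτ⟩ := exists_rightConj_eq_normal_form (h σ (hsub.mem (by simp)))
    (h τ (hsub.mem (by simp))) hfix heq
  refine .of_map_rightConj (s := s) ?_
  rw [List.map_append, List.map_cons, List.map_singleton, hσ]
  exact hurwitzCollides_of_normal_form hτ
    (by simpa [cycleType_rightConj] using hr) (by simpa using hlen)

theorem stmt_13_general {k : ℕ} (hk : 5 ≤ k) (g : Fin k → Perm (Fin 6))
    (hmem : ∀ i, g i ∈ alternatingGroup (Fin 6)) (hord : ∀ i, orderOf (g i) = 2) :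
    ∃ h : Fin k → Perm (Fin 6), HurwitzEquiv g h ∧
      ∃ i j : Fin k, i ≠ j ∧ FixedPts (h i) = FixedPts (h j) := by
  obtain ⟨w, hw⟩ := hurwitzCollides_of_five_le_length (l := List.ofFn g) (by simpa using hk) <|
    List.forall_mem_ofFn_iff.mpr fun i => cycleType_eq_of_orderOf_eq_two (hmem i) (hord i)
  obtain ⟨h, hgh, hh⟩ := exists_hurwitzEquiv_ofFn_eq_braid w g
  rw [← hh, List.map_ofFn, List.nodup_ofFn, Function.Injective] at hw
  push Not at hw
  obtain ⟨i, j, hij, hne⟩ := hw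
  exact ⟨h, hgh, i, j, hne, hij⟩

/-- Any `5`-tuple of order-2 elements of `A₆` is Hurwitz-equivalent to a tuple
with two entries (at distinct indices) having the same set of fixed points. -/
theorem stmt_13 (g : Fin 5 → Equiv.Perm (Fin 6))
    (hmem : ∀ i, g i ∈ alternatingGroup (Fin 6))
    (hord : ∀ i, orderOf (g i) = 2) :
    ∃ h : Fin 5 → Equiv.Perm (Fin 6), HurwitzEquiv g h ∧
      ∃ i j : Fin 5, i ≠ j ∧ FixedPts (h i) = FixedPts (h j) :=
  stmt_13_general le_rfl g hmem hord
end
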